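/- arXiv:1305.5440 — 2 statements merged into one kernel-verified Lean document; each statement's English description precedes it below -/
import Mathlib

section
/- Let r ≥ 1 and ε > 0, let V_1, …, V_r be finite nonempty sets, and let g : V_1 × ⋯ × V_r → ℝ_{≥0} be upper η-regular with η ≤ 2^{−40r/ε²}. Then there exists g̃ : V_1 × ⋯ × V_r → [0,1] of complexity at most 2^{20r/ε²} such that (g, g̃) is an ε-discrepancy pair. -/
/-!
The approximant `g'` is built by an additive update, with no averaging over partitions. As long as
the truncation `clamp ε (F x)` of the current `F = ∑ᵢ sᵢ 1_{Sᵢ}` (signs `sᵢ`, clique sets `Sᵢ`)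
fails to be an `ε`-discrepancy pair with `g`, some signed clique indicator `f` has
`E[(g - clamp ε F) f] > ε`, and `F` is replaced by `F + f`.

Progress is measured by `E[g F - Ψ(F)]`, where `Ψ` (`potential`) is the convex function with
derivative `clamp ε`. As `Ψ(y + d) ≤ Ψ(y) + clamp ε y * d + ε d² / 2` (`potential_add_le`), each
update gains at least `ε / 2` (`exists_signedSum`). On the other hand `F` is constant on the at most
`2^(r k)` atoms generated by the sets used so far (`k` steps), each of which is a clique set; so upper
regularity gives `E[(g - 1) F⁺] ≤ 2^(r k) k η` (`avg_signedSum_le`), and `y⁺ - Ψ(y) ≤ 1 / (2 ε)`. Hence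
`k ε / 2 ≤ 2^(r k) k η + 1 / (2 ε)`, which is false for `k = ⌈2 / ε²⌉` when `ε < 1`. When `1 ≤ ε` the
constant `g' = 1` works.
-/

open Finset

/-- The average (expectation with respect to the uniform measure) of `f` over `α`. -/
noncomputable def avg {α : Type*} [Fintype α] (f : α → ℝ) : ℝ :=
  (∑ x, f x) / (Fintype.card α)

variable {r : ℕ} {V : Fin r → Type} [∀ j, Fintype (V j)]

/-- The product `∏_{f ∈ ∂e} 1_{B_f}(x_f)` over the faces `f = e ∖ {j}` of
`e = {1, …, r}`. -/
noncomputable def faceProd (B : (j : Fin r) → Set ((i : {i : Fin r // i ≠ j}) → V i.1))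
    (x : (j : Fin r) → V j) : ℝ :=
  ∏ j : Fin r,
    Set.indicator (B j) (fun _ => (1 : ℝ)) (fun i : {i : Fin r // i ≠ j} => x i.1)

/-- `g : V_1 × ⋯ × V_r → ℝ≥0` is upper `η`-regular. -/
noncomputable def UpperRegular (g : ((j : Fin r) → V j) → ℝ) (η : ℝ) : Prop :=
  ∀ B : (j : Fin r) → Set ((i : {i : Fin r // i ≠ j}) → V i.1),
    avg (fun x : (j : Fin r) → V j => (g x - 1) * faceProd B x) ≤ η

/-- `(g, g')` is an `ε`-discrepancy pair. -/
noncomputable def DiscPair (g g' : ((j : Fin r) → V j) → ℝ) (ε : ℝ) : Prop :=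
  ∀ B : (j : Fin r) → Set ((i : {i : Fin r // i ≠ j}) → V i.1),
    |avg (fun x : (j : Fin r) → V j => (g x - g' x) * faceProd B x)| ≤ ε

/-- `S` is the set of `r`-cliques of some `(r-1)`-uniform hypergraph:
`1_S(x) = ∏_{f ∈ ∂e} 1_{B_f}(x_f)` for some sets `B_f ⊆ V_f`. -/
def IsCliqueSet (S : Set ((j : Fin r) → V j)) : Prop :=
  ∃ B : (j : Fin r) → Set ((i : {i : Fin r // i ≠ j}) → V i.1),
    ∀ x, x ∈ S ↔ ∀ j : Fin r, (fun i : {i : Fin r // i ≠ j} => x i.1) ∈ B j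

/-- `f` has complexity at most `T`: there is a partition of `V_1 × ⋯ × V_r` into `T`
(possibly empty) clique sets on each of which `f` is constant. -/
def FComplexityLE (f : ((j : Fin r) → V j) → ℝ) (T : ℕ) : Prop :=
  ∃ P : Fin T → Set ((j : Fin r) → V j),
    (∀ i, IsCliqueSet (P i)) ∧
    (∀ i₁ i₂, i₁ ≠ i₂ → P i₁ ∩ P i₂ = ∅) ∧
    (⋃ i, P i) = Set.univ ∧
    ∀ i, ∀ x ∈ P i, ∀ y ∈ P i, f x = f y

set_option linter.unusedSectionVars false

/-! ### The truncation and its potential -/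

/-- The truncation of `ε y` to `[0, 1]`. -/
noncomputable def clamp (ε y : ℝ) : ℝ := max 0 (min 1 (ε * y))

/-- The antiderivative of `clamp ε` vanishing at `0`, written as the value at `u = clamp ε y` of
`u y - u² / (2 ε)`, a quantity that `clamp ε y` maximises over `u ∈ [0, 1]`. -/
noncomputable def potential (ε y : ℝ) : ℝ := clamp ε y * y - clamp ε y ^ 2 / (2 * ε)

lemma clamp_nonneg (ε y : ℝ) : 0 ≤ clamp ε y := le_max_left _ _

lemma clamp_le_one (ε y : ℝ) : clamp ε y ≤ 1 := max_le zero_le_one (min_le_left _ _)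

/-- The variational inequality of the projection of `ε y` onto `[0, 1]`. -/
lemma clamp_variational (ε y w : ℝ) (h0 : 0 ≤ w) (h1 : w ≤ 1) :
    (w - clamp ε y) * (ε * y - clamp ε y) ≤ 0 := by
  unfold clamp
  rcases le_total 1 (ε * y) with h | h
  · rw [min_eq_left h, max_eq_right zero_le_one]
    nlinarith
  · rw [min_eq_right h]
    rcases le_total 0 (ε * y) with h' | h'
    · rw [max_eq_right h']; simp
    · rw [max_eq_left h']; nlinarith

lemma potential_add_le (ε y d : ℝ) (hε : 0 < ε) :
    potential ε (y + d) ≤ potential ε y + clamp ε y * d + ε / 2 * d ^ 2 := by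
  have h := clamp_variational ε y (clamp ε (y + d)) (clamp_nonneg _ _) (clamp_le_one _ _)
  unfold potential
  set u := clamp ε y
  set w := clamp ε (y + d)
  have key : 0 ≤ 2 * ε * ((u * y - u ^ 2 / (2 * ε) + u * d + ε / 2 * d ^ 2)
      - (w * (y + d) - w ^ 2 / (2 * ε))) := by
    have e : 2 * ε * ((u * y - u ^ 2 / (2 * ε) + u * d + ε / 2 * d ^ 2)
        - (w * (y + d) - w ^ 2 / (2 * ε)))
        = (u - w + ε * d) ^ 2 - 2 * ((w - u) * (ε * y - u)) := by
      field_simp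
      ring
    rw [e]
    nlinarith [sq_nonneg (u - w + ε * d)]
  have := nonneg_of_mul_nonneg_right key (by positivity)
  linarith

lemma posPart_sub_potential_le (ε y : ℝ) (hε : 0 < ε) :
    max 0 y - potential ε y ≤ 1 / (2 * ε) := by
  -- compare `clamp ε y` with the competitors `0` and `1` in the maximisation defining `potential`
  have key : ∀ w, 0 ≤ w → w ≤ 1 → w * y - w ^ 2 / (2 * ε) ≤ potential ε y := by
    intro w h0 h1
    have h := clamp_variational ε y w h0 h1
    unfold potential
    set u := clamp ε y
    have e : 2 * ε * ((u * y - u ^ 2 / (2 * ε)) - (w * y - w ^ 2 / (2 * ε)))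
        = (u - w) ^ 2 - 2 * ((w - u) * (ε * y - u)) := by
      field_simp
      ring
    have : 0 ≤ 2 * ε * ((u * y - u ^ 2 / (2 * ε)) - (w * y - w ^ 2 / (2 * ε))) := by
      rw [e]; nlinarith [sq_nonneg (u - w)]
    have := nonneg_of_mul_nonneg_right this (by positivity)
    linarith
  have a := key 0 le_rfl zero_le_one
  have b := key 1 zero_le_one le_rfl
  have c : 0 < 1 / (2 * ε) := by positivity
  rw [sub_le_iff_le_add]
  refine max_le ?_ ?_
  · simp only [zero_mul, ne_eq, OfNat.ofNat_ne_zero, not_false_eq_true, zero_pow, zero_div,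
      sub_zero] at a
    linarith
  · rw [one_mul, one_pow] at b
    linarith

/-! ### Averages -/

lemma avg_add {α : Type*} [Fintype α] (f g : α → ℝ) :
    avg (fun x => f x + g x) = avg f + avg g := by
  simp only [avg, Finset.sum_add_distrib, add_div]

lemma avg_mul_left {α : Type*} [Fintype α] (c : ℝ) (f : α → ℝ) :
    avg (fun x => c * f x) = c * avg f := by
  simp only [avg, ← Finset.mul_sum, mul_div_assoc]

lemma avg_sum {α ι : Type*} [Fintype α] [Fintype ι] (f : ι → α → ℝ) :
    avg (fun x => ∑ i, f i x) = ∑ i, avg (f i) := by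
  simp only [avg]
  rw [Finset.sum_comm, Finset.sum_div]

lemma avg_mono {α : Type*} [Fintype α] {f g : α → ℝ} (h : ∀ x, f x ≤ g x) : avg f ≤ avg g := by
  unfold avg
  gcongr
  exact h _

lemma avg_const {α : Type*} [Fintype α] [Nonempty α] (c : ℝ) : avg (fun _ : α => c) = c := by
  simp [avg]

/-! ### Signed sums of clique indicators and their atoms -/

/-- A system of face sets `B_f ⊆ V_f`, the face `f = e ∖ {j}` being indexed by `j`. -/
abbrev FaceSets (V : Fin r → Type) : Type :=
  (j : Fin r) → Set ((i : {i : Fin r // i ≠ j}) → V i.1)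

open Classical in
lemma faceProd_eq_ite (B : FaceSets V) (x : (j : Fin r) → V j) :
    faceProd B x
      = if ∀ j : Fin r, (fun i : {i : Fin r // i ≠ j} => x i.1) ∈ B j then 1 else 0 := by
  simp only [faceProd, Set.indicator_apply]
  rw [Finset.prod_ite_zero]
  simp

lemma faceProd_nonneg (B : FaceSets V) (x : (j : Fin r) → V j) : 0 ≤ faceProd B x := by
  classical
  rw [faceProd_eq_ite]; split_ifs <;> norm_num

lemma faceProd_le_one (B : FaceSets V) (x : (j : Fin r) → V j) : faceProd B x ≤ 1 := by
  classical
  rw [faceProd_eq_ite]; split_ifs <;> norm_num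

/-- The function `∑ᵢ sᵢ 1_{Sᵢ}`, where `Sᵢ` is the clique set of the face sets `B i`. -/
noncomputable def signedSum {k : ℕ} (s : Fin k → ℝ) (B : Fin k → FaceSets V)
    (x : (j : Fin r) → V j) : ℝ :=
  ∑ i, s i * faceProd (B i) x

/-- The face sets of the atom with pattern `p`: on each face `j`, membership in `B i j` is
prescribed by `p j i`. -/
def atomFaces {k : ℕ} (B : Fin k → FaceSets V) (p : Fin r → Fin k → Bool) : FaceSets V :=
  fun j => {y | ∀ i, y ∈ B i j ↔ p j i = true}

/-- The pattern of the atom that contains `x`. -/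
noncomputable def pattern {k : ℕ} (B : Fin k → FaceSets V) (x : (j : Fin r) → V j) :
    Fin r → Fin k → Bool :=
  open Classical in fun j i => decide ((fun l : {l : Fin r // l ≠ j} => x l.1) ∈ B i j)

lemma mem_atomFaces_iff {k : ℕ} (B : Fin k → FaceSets V) (p : Fin r → Fin k → Bool)
    (x : (j : Fin r) → V j) :
    (∀ j : Fin r, (fun i : {i : Fin r // i ≠ j} => x i.1) ∈ atomFaces B p j)
      ↔ pattern B x = p := by
  classical
  simp only [atomFaces, pattern, Set.mem_ofPred_eq, funext_iff]
  refine forall_congr' fun j => forall_congr' fun i => ?_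
  rw [Bool.eq_iff_iff (a := decide _), decide_eq_true_iff]

/-- The value of `signedSum s B` on the atom with pattern `p`. -/
noncomputable def atomValue {k : ℕ} (s : Fin k → ℝ) (p : Fin r → Fin k → Bool) : ℝ :=
  ∑ i, s i * (if ∀ j, p j i = true then 1 else 0)

lemma signedSum_eq_atomValue {k : ℕ} (s : Fin k → ℝ) (B : Fin k → FaceSets V)
    (x : (j : Fin r) → V j) : signedSum s B x = atomValue s (pattern B x) := by
  classical
  simp only [signedSum, atomValue, faceProd_eq_ite, pattern, decide_eq_true_iff]

lemma atomValue_le {k : ℕ} (s : Fin k → ℝ) (hs : ∀ i, |s i| ≤ 1) (p : Fin r → Fin k → Bool) :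
    atomValue s p ≤ k := by
  have : atomValue s p ≤ ∑ _i : Fin k, (1 : ℝ) := by
    refine Finset.sum_le_sum fun i _ => ?_
    have := (abs_le.1 (hs i)).2
    split_ifs <;> linarith
  simpa using this

lemma fComplexityLE_signedSum {k : ℕ} (s : Fin k → ℝ) (B : Fin k → FaceSets V) (φ : ℝ → ℝ) :
    FComplexityLE (fun x => φ (signedSum s B x)) (2 ^ (k * r)) := by
  classical
  have hc : Fintype.card (Fin r → Fin k → Bool) = 2 ^ (k * r) := by
    simp [pow_mul]
  let e : Fin (2 ^ (k * r)) ≃ (Fin r → Fin k → Bool) :=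
    (finCongr hc.symm).trans (Fintype.equivFin _).symm
  refine ⟨fun i => {x | pattern B x = e i}, fun i => ⟨atomFaces B (e i), fun x => ?_⟩, ?_, ?_, ?_⟩
  · exact (mem_atomFaces_iff B (e i) x).symm
  · intro i₁ i₂ h
    ext x
    simp only [Set.mem_inter_iff, Set.mem_ofPred_eq, Set.mem_empty_iff_false, iff_false, not_and]
    intro h1 h2
    exact h (e.injective (h1.symm.trans h2))
  · ext x
    simp only [Set.mem_iUnion, Set.mem_ofPred_eq, Set.mem_univ, iff_true]
    exact ⟨e.symm (pattern B x), by simp⟩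
  · intro i x hx y hy
    simp only [Set.mem_ofPred_eq] at hx hy
    simp only [signedSum_eq_atomValue, hx, hy]

/-! ### Upper and lower bounds for the progress measure -/

lemma avg_signedSum_le {k : ℕ} (s : Fin k → ℝ) (hs : ∀ i, |s i| ≤ 1) (B : Fin k → FaceSets V)
    (g : ((j : Fin r) → V j) → ℝ) (η : ℝ) (hη : 0 ≤ η) (hreg : UpperRegular g η) :
    avg (fun x => (g x - 1) * max 0 (signedSum s B x)) ≤ 2 ^ (k * r) * (k * η) := by
  classical
  have h1 : (fun x => (g x - 1) * max 0 (signedSum s B x))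
      = fun x => ∑ p : Fin r → Fin k → Bool,
          max 0 (atomValue s p) * ((g x - 1) * faceProd (atomFaces B p) x) := by
    funext x
    rw [signedSum_eq_atomValue]
    simp only [faceProd_eq_ite, mem_atomFaces_iff]
    simp [mul_comm]
  rw [h1, avg_sum]
  have h2 : ∀ p : Fin r → Fin k → Bool,
      avg (fun x => max 0 (atomValue s p) * ((g x - 1) * faceProd (atomFaces B p) x))
        ≤ k * η := by
    intro p
    rw [avg_mul_left]
    calc _ ≤ max 0 (atomValue s p) * η :=
          mul_le_mul_of_nonneg_left (hreg _) (le_max_left _ _)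
      _ ≤ k * η :=
          mul_le_mul_of_nonneg_right (max_le (Nat.cast_nonneg k) (atomValue_le s hs p)) hη
  refine (Finset.sum_le_sum fun p _ => h2 p).trans (le_of_eq ?_)
  simp [pow_mul]

/-- If no truncated signed sum of fewer than `K` clique indicators is an `ε`-discrepancy pair with
`g`, then the update can be run for `K` steps, each gaining `ε / 2`. -/
lemma exists_signedSum [∀ j, Nonempty (V j)] (g : ((j : Fin r) → V j) → ℝ) (ε : ℝ) (hε : 0 < ε)
    (K : ℕ)
    (hbad : ∀ k < K, ∀ (s : Fin k → ℝ) (B : Fin k → FaceSets V), (∀ i, |s i| ≤ 1) →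
      ¬ DiscPair g (fun x => clamp ε (signedSum s B x)) ε) :
    ∀ k ≤ K, ∃ (s : Fin k → ℝ) (B : Fin k → FaceSets V), (∀ i, |s i| ≤ 1) ∧
      k * (ε / 2) ≤ avg (fun x => g x * signedSum s B x - potential ε (signedSum s B x)) := by
  intro k
  induction k with
  | zero =>
    intro _
    refine ⟨fun _ => 0, fun _ _ => ∅, by simp, ?_⟩
    simp [signedSum, potential, clamp, avg]
  | succ k ih =>
    intro hk
    obtain ⟨s, B, hs, hF⟩ := ih (by omega)
    have hb := hbad k (by omega) s B hs
    simp only [DiscPair, not_forall, not_le] at hb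
    obtain ⟨C, hC⟩ := hb
    obtain ⟨σ, hσ, hσC⟩ : ∃ σ : ℝ, |σ| ≤ 1 ∧
        ε < σ * avg (fun x => (g x - clamp ε (signedSum s B x)) * faceProd C x) := by
      rcases lt_abs.1 hC with h | h
      · exact ⟨1, by simp, by linarith⟩
      · exact ⟨-1, by simp, by linarith⟩
    refine ⟨Fin.cons σ s, Fin.cons C B, fun i => ?_, ?_⟩
    · refine Fin.cases ?_ (fun i => ?_) i
      · simpa using hσ
      · simpa using hs i
    · have hsum : ∀ x, signedSum (Fin.cons σ s : Fin (k + 1) → ℝ)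
          (Fin.cons C B : Fin (k + 1) → FaceSets V) x = signedSum s B x + σ * faceProd C x := by
        intro x
        simp only [signedSum, Fin.sum_univ_succ, Fin.cons_zero, Fin.cons_succ]
        ring
      simp only [hsum]
      have hpt : ∀ x, (g x * signedSum s B x - potential ε (signedSum s B x))
          + (σ * ((g x - clamp ε (signedSum s B x)) * faceProd C x) + -(ε / 2))
          ≤ g x * (signedSum s B x + σ * faceProd C x)
            - potential ε (signedSum s B x + σ * faceProd C x) := by
        intro x
        have h := potential_add_le ε (signedSum s B x) (σ * faceProd C x) hε
        have hsq : (σ * faceProd C x) ^ 2 ≤ 1 := by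
          rw [sq_le_one_iff_abs_le_one, abs_mul, abs_of_nonneg (faceProd_nonneg C x)]
          exact mul_le_one₀ hσ (faceProd_nonneg C x) (faceProd_le_one C x)
        have : ε / 2 * (σ * faceProd C x) ^ 2 ≤ ε / 2 * 1 :=
          mul_le_mul_of_nonneg_left hsq (by positivity)
        linarith
      have := avg_mono hpt
      rw [avg_add, avg_add, avg_mul_left, avg_const] at this
      push_cast
      linarith

/-- For `g' = 1` every test value `E[(g - 1) ∏ 1_{B_f}]` lies in `[-1, η]`, so `ε ≥ 1` is trivial. -/
lemma discPair_one [∀ j, Nonempty (V j)] (g : ((j : Fin r) → V j) → ℝ) (hg : ∀ x, 0 ≤ g x)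
    (ε η : ℝ) (hε : 1 ≤ ε) (hη : η ≤ 1) (hreg : UpperRegular g η) :
    DiscPair g (fun _ => 1) ε := by
  intro B
  rw [abs_le]
  constructor
  · have : avg (fun _ : (j : Fin r) → V j => (-1 : ℝ))
        ≤ avg (fun x : (j : Fin r) → V j => (g x - 1) * faceProd B x) := by
      refine avg_mono fun x => ?_
      nlinarith [hg x, faceProd_nonneg B x, faceProd_le_one B x,
        mul_nonneg (hg x) (faceProd_nonneg B x)]
    rw [avg_const] at this
    linarith
  · exact (hreg B).trans (hη.trans hε)

/-- The arithmetic contradicting `K = ⌈2 / ε²⌉` updates. -/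
lemma numeric_bound (r : ℕ) (hr : 1 ≤ r) (ε : ℝ) (hε : 0 < ε) (h1 : ε < 1) (K : ℕ)
    (hK : 2 / ε ^ 2 ≤ K) (hK' : (K : ℝ) ≤ 3 / ε ^ 2) :
    2 ^ (K * r) * (K * (2 : ℝ) ^ (-(40 * (r : ℝ)) / ε ^ 2)) + 1 / (2 * ε) < K * (ε / 2) := by
  have hr' : (1 : ℝ) ≤ r := by exact_mod_cast hr
  have hε2 : 0 < ε ^ 2 := by positivity
  have hKpos : (0 : ℝ) < K := lt_of_lt_of_le (by positivity) hK
  have e1 : (2 : ℝ) ^ (K * r) * (2 : ℝ) ^ (-(40 * (r : ℝ)) / ε ^ 2) ≤ (2 : ℝ) ^ (-(5 / ε)) := by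
    rw [← Real.rpow_natCast, ← Real.rpow_add (by norm_num)]
    refine Real.rpow_le_rpow_of_exponent_le (by norm_num) ?_
    push_cast
    have a : (K : ℝ) * r ≤ 3 / ε ^ 2 * r := by gcongr
    have b : 5 / ε ≤ 37 / ε ^ 2 * r := by
      calc 5 / ε ≤ 37 / ε ^ 2 := by
            rw [div_le_div_iff₀ hε hε2]; nlinarith
        _ ≤ 37 / ε ^ 2 * r := le_mul_of_one_le_right (by positivity) hr'
    have c : -(40 * (r : ℝ)) / ε ^ 2 = -(3 / ε ^ 2 * r) - 37 / ε ^ 2 * r := by ring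
    rw [c]; linarith
  -- Bernoulli: `2 ^ y ≥ 1 + y` for `y ≥ 1`
  have e2 : (2 : ℝ) ^ (-(5 / ε)) < ε / 4 := by
    have hy : 1 ≤ 5 / ε := by rw [le_div_iff₀ hε]; linarith
    have hb := one_add_mul_self_le_rpow_one_add (s := (1 : ℝ)) (by norm_num) hy
    norm_num at hb
    rw [Real.rpow_neg (by norm_num), inv_lt_comm₀ (by positivity) (by positivity)]
    refine lt_of_lt_of_le ?_ hb
    rw [inv_div]
    have : 4 / ε ≤ 5 / ε := by gcongr; norm_num
    linarith
  have e3 : 1 / (2 * ε) ≤ K * (ε / 4) := by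
    calc 1 / (2 * ε) = 2 / ε ^ 2 * (ε / 4) := by field_simp; norm_num
      _ ≤ K * (ε / 4) := by gcongr
  have e4 : (2 : ℝ) ^ (K * r) * (2 : ℝ) ^ (-(40 * (r : ℝ)) / ε ^ 2) * K < ε / 4 * K :=
    mul_lt_mul_of_pos_right (lt_of_le_of_lt e1 e2) hKpos
  nlinarith

/-- **Sparse weak hypergraph regularity lemma.** For any `ε > 0` and any
`g : V_1 × ⋯ × V_r → ℝ≥0` which is upper `η`-regular with `η ≤ 2^{-40r/ε²}`, there
exists `g' : V_1 × ⋯ × V_r → [0,1]` of complexity at most `2^{20r/ε²}` such that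
`(g, g')` is an `ε`-discrepancy pair. -/
theorem sparse_weak_regularity (r : ℕ) (hr : 1 ≤ r) (ε : ℝ) (hε : 0 < ε)
    (V : Fin r → Type) [∀ j, Fintype (V j)] [∀ j, Nonempty (V j)]
    (g : ((j : Fin r) → V j) → ℝ) (hg : ∀ x, 0 ≤ g x)
    (η : ℝ) (hη : η ≤ (2 : ℝ) ^ (-(40 * (r : ℝ)) / ε ^ 2))
    (hreg : UpperRegular g η) :
    ∃ (g' : ((j : Fin r) → V j) → ℝ) (T : ℕ),
      (T : ℝ) ≤ (2 : ℝ) ^ (20 * (r : ℝ) / ε ^ 2) ∧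
      (∀ x, 0 ≤ g' x ∧ g' x ≤ 1) ∧
      FComplexityLE g' T ∧
      DiscPair g g' ε := by
  have hη0 : (0 : ℝ) < (2 : ℝ) ^ (-(40 * (r : ℝ)) / ε ^ 2) := by positivity
  have hreg0 : UpperRegular g ((2 : ℝ) ^ (-(40 * (r : ℝ)) / ε ^ 2)) :=
    fun B => (hreg B).trans hη
  have hη1 : (2 : ℝ) ^ (-(40 * (r : ℝ)) / ε ^ 2) ≤ 1 := by
    refine Real.rpow_le_one_of_one_le_of_nonpos (by norm_num) ?_
    rw [neg_div]
    exact neg_nonpos.2 (by positivity)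
  rcases le_or_gt 1 ε with h1 | h1
  · refine ⟨fun _ => 1, 1, ?_, by simp, ?_, discPair_one g hg ε _ h1 hη1 hreg0⟩
    · exact_mod_cast Real.one_le_rpow (by norm_num) (by positivity)
    · simpa using fComplexityLE_signedSum (V := V) (k := 0) Fin.elim0 Fin.elim0 (fun _ => 1)
  · by_contra hcon
    have hε2 : 0 < ε ^ 2 := by positivity
    obtain ⟨K, hK, hK'⟩ : ∃ K : ℕ, 2 / ε ^ 2 ≤ K ∧ (K : ℝ) ≤ 3 / ε ^ 2 := by
      refine ⟨⌈2 / ε ^ 2⌉₊, Nat.le_ceil _, ?_⟩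
      have a := (Nat.ceil_lt_add_one (show 0 ≤ 2 / ε ^ 2 by positivity)).le
      have b : 1 ≤ 1 / ε ^ 2 := by
        rw [le_div_iff₀ hε2]; nlinarith
      have c : 3 / ε ^ 2 = 2 / ε ^ 2 + 1 / ε ^ 2 := by ring
      linarith
    have hbad : ∀ k < K, ∀ (s : Fin k → ℝ) (B : Fin k → FaceSets V), (∀ i, |s i| ≤ 1) →
        ¬ DiscPair g (fun x => clamp ε (signedSum s B x)) ε := by
      intro k hk s B _ hd
      refine hcon ⟨_, 2 ^ (k * r), ?_, fun x => ⟨clamp_nonneg _ _, clamp_le_one _ _⟩,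
        fComplexityLE_signedSum s B (clamp ε), hd⟩
      push_cast
      rw [← Real.rpow_natCast]
      refine Real.rpow_le_rpow_of_exponent_le (by norm_num) ?_
      push_cast
      have hkK : (k : ℝ) ≤ 20 / ε ^ 2 := by
        have a : (k : ℝ) ≤ K := by exact_mod_cast hk.le
        have b : 3 / ε ^ 2 ≤ 20 / ε ^ 2 := by gcongr; norm_num
        linarith
      calc (k : ℝ) * r ≤ 20 / ε ^ 2 * r := by gcongr
        _ = 20 * r / ε ^ 2 := by ring
    obtain ⟨s, B, hs, hF⟩ := exists_signedSum g ε hε K hbad K le_rfl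
    have hup : avg (fun x => g x * signedSum s B x - potential ε (signedSum s B x))
        ≤ avg (fun x => (g x - 1) * max 0 (signedSum s B x) + 1 / (2 * ε)) := by
      refine avg_mono fun x => ?_
      have a := posPart_sub_potential_le ε (signedSum s B x) hε
      have b := mul_le_mul_of_nonneg_left (le_max_right 0 (signedSum s B x)) (hg x)
      linarith
    rw [avg_add, avg_const] at hup
    have h2 := avg_signedSum_le s hs B g _ hη0.le hreg0
    have h3 := numeric_bound r hr ε hε h1 K hK hK'
    linarith
end

section
/- Let X be a finite set and 𝓕 a family of subsets of X satisfying the standing assumptions, and suppose 𝓕 is t-splittable for some t ≥ 2. Let 0 < ε, η < 1 and T := t^{20/ε²}. Then for any g : X → ℝ_{≥0} which is upper η-regular with η ≤ ε/(8tT), there exists g̃ : X → [0,1] with complexity at most T such that (g, g̃) is an ε-discrepancy pair. -/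
/-!
The proof is an energy-increment argument with truncation. For a partition `P` of `X` into
members of `F`, let `g_P` be the conditional expectation of `g` on `P` (`condAvg`) and let
`h_P = min 1 g_P` (`trunc`). Applying upper regularity on each part, the truncation loses at most
`|P| η` in mean (`sum_condAvg_sub_trunc_le`).

If `(g, h_P)` is not an `ε`-discrepancy pair, witnessed by `A ∈ F`, let `P'` be the common
refinement of `P` with a partition into at most `t` members of `F` that has `A` as a part. Since `A`
is a union of parts of `P'`, the mean of `h_{P'} - h_P` on `A` is at least `ε - |P'| η` in absolute
value, so by Cauchy–Schwarz `h_{P'} - h_P` has large `L²` norm. As `g_{P'} - g_P` is orthogonal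
to the `P`-measurable function `h_P ∈ [0, 1]`, the energy `E[h_P²]` grows by at least
`(ε - |P'| η)² - 2 |P'| η` (`energy_step`).

The loss terms `2 |P'| η` form a geometric series, so after `i` steps the energy is at least
`(3/4) i ε² - 4 t^i η`. The energy is at most `1`, so this fails for `i = ⌊20/ε²⌋`, and the
iteration must find a suitable `h_P` before that.
-/

open Finset

/-- `E[g·1_A]`, the average over `X` (with respect to the uniform measure) of `g`
restricted to `A`. -/
noncomputable def eavg {X : Type} [Fintype X] (g : X → ℝ) (A : Finset X) : ℝ :=
  (∑ x ∈ A, g x) / (Fintype.card X)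

/-- `P` is a partition of `X` (into pairwise disjoint sets covering `X`). -/
def IsPartition {X : Type} [Fintype X] [DecidableEq X] (P : Finset (Finset X)) : Prop :=
  (∀ x : X, ∃ A ∈ P, x ∈ A) ∧ ∀ A ∈ P, ∀ B ∈ P, A ≠ B → Disjoint A B

/-- The standing assumptions on the family `𝓕`: closed under intersection, contains
`X` and all singletons, and every member is a part of some partition of `X` into
members of `𝓕`. -/
def Standing {X : Type} [Fintype X] [DecidableEq X] (F : Finset (Finset X)) : Prop :=
  (∀ A ∈ F, ∀ B ∈ F, A ∩ B ∈ F) ∧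
  Finset.univ ∈ F ∧
  (∀ x : X, {x} ∈ F) ∧
  (∀ S ∈ F, ∃ P : Finset (Finset X), IsPartition P ∧ (∀ A ∈ P, A ∈ F) ∧ S ∈ P)

/-- `𝓕` is `t`-splittable: every `S ∈ 𝓕` is a part of some partition of `X` into at
most `t` members of `𝓕`. -/
def Splittable {X : Type} [Fintype X] [DecidableEq X] (F : Finset (Finset X))
    (t : ℕ) : Prop :=
  ∀ S ∈ F, ∃ P : Finset (Finset X),
    IsPartition P ∧ (∀ A ∈ P, A ∈ F) ∧ S ∈ P ∧ P.card ≤ t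

/-- `g` is upper `η`-regular with respect to `𝓕`: `E[g·1_A] ≤ E[1_A] + η` for all
`A ∈ 𝓕`. -/
noncomputable def UpperReg {X : Type} [Fintype X] [DecidableEq X]
    (F : Finset (Finset X)) (g : X → ℝ) (η : ℝ) : Prop :=
  ∀ A ∈ F, eavg g A ≤ (A.card : ℝ) / (Fintype.card X) + η

/-- `(g, g')` is an `ε`-discrepancy pair: `|E[(g - g')·1_A]| ≤ ε` for all `A ∈ 𝓕`. -/
noncomputable def Disc {X : Type} [Fintype X] [DecidableEq X]
    (F : Finset (Finset X)) (g g' : X → ℝ) (ε : ℝ) : Prop :=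
  ∀ A ∈ F, |eavg (fun x => g x - g' x) A| ≤ ε

/-- `f` has complexity at most `T` (a real bound): there is a partition of `X` into at
most `T` members of `𝓕` on each of which `f` is constant. -/
def ComplexityLE {X : Type} [Fintype X] [DecidableEq X] (F : Finset (Finset X))
    (f : X → ℝ) (T : ℝ) : Prop :=
  ∃ P : Finset (Finset X), IsPartition P ∧ (∀ A ∈ P, A ∈ F) ∧ (P.card : ℝ) ≤ T ∧
    ∀ A ∈ P, ∀ x ∈ A, ∀ y ∈ A, f x = f y

section Helpers

variable {X : Type} [DecidableEq X]

/-- The conditional expectation of `g` on the partition `P`: on a part `B ∈ P` it is the average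
of `g` over `B`. -/
noncomputable def condAvg (P : Finset (Finset X)) (g : X → ℝ) (x : X) : ℝ :=
  ∑ B ∈ P, if x ∈ B then (∑ y ∈ B, g y) / (B.card : ℝ) else 0

/-- The conditional expectation of `g` on `P`, truncated at `1`. -/
noncomputable def trunc (P : Finset (Finset X)) (g : X → ℝ) (x : X) : ℝ :=
  min 1 (condAvg P g x)

lemma condAvg_nonneg (P : Finset (Finset X)) {g : X → ℝ} (hg : ∀ x, 0 ≤ g x) (x : X) :
    0 ≤ condAvg P g x := by
  unfold condAvg
  refine Finset.sum_nonneg fun B _ => ?_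
  split_ifs
  · exact div_nonneg (Finset.sum_nonneg fun y _ => hg y) (Nat.cast_nonneg _)
  · exact le_rfl

lemma trunc_nonneg (P : Finset (Finset X)) {g : X → ℝ} (hg : ∀ x, 0 ≤ g x) (x : X) :
    0 ≤ trunc P g x := le_min zero_le_one (condAvg_nonneg P hg x)

lemma trunc_le_one (P : Finset (Finset X)) (g : X → ℝ) (x : X) : trunc P g x ≤ 1 :=
  min_le_left _ _

lemma trunc_le_condAvg (P : Finset (Finset X)) (g : X → ℝ) (x : X) :
    trunc P g x ≤ condAvg P g x := min_le_right _ _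

variable [Fintype X]

lemma condAvg_eq {P : Finset (Finset X)} (hP : IsPartition P) (g : X → ℝ) {B : Finset X}
    (hB : B ∈ P) {x : X} (hx : x ∈ B) :
    condAvg P g x = (∑ y ∈ B, g y) / (B.card : ℝ) := by
  unfold condAvg
  rw [Finset.sum_eq_single B]
  · simp [hx]
  · intro C hC hCB
    have hd := hP.2 C hC B hB hCB
    rw [if_neg]
    exact fun hxC => (Finset.disjoint_left.1 hd) hxC hx
  · exact fun h => absurd hB h

lemma trunc_const {P : Finset (Finset X)} (hP : IsPartition P) (g : X → ℝ) :
    ∀ B ∈ P, ∀ x ∈ B, ∀ y ∈ B, trunc P g x = trunc P g y := by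
  intro B hB x hx y hy
  rw [trunc, trunc, condAvg_eq hP g hB hx, condAvg_eq hP g hB hy]

lemma sum_parts {P : Finset (Finset X)} (hP : IsPartition P) (f : X → ℝ) :
    ∑ x, f x = ∑ B ∈ P, ∑ x ∈ B, f x := by
  have hu : (Finset.univ : Finset X) = P.biUnion id := by
    ext x
    simpa using hP.1 x
  rw [hu, Finset.sum_biUnion]
  · rfl
  · exact fun A hA B hB h => hP.2 A hA B hB h

lemma sum_condAvg_part {P : Finset (Finset X)} (hP : IsPartition P) (g : X → ℝ) {B : Finset X}
    (hB : B ∈ P) : ∑ x ∈ B, condAvg P g x = ∑ x ∈ B, g x := by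
  rw [Finset.sum_congr rfl fun x hx => condAvg_eq hP g hB hx]
  rcases B.eq_empty_or_nonempty with rfl | hne
  · simp
  · have : (B.card : ℝ) ≠ 0 := by exact_mod_cast hne.card_pos.ne'
    rw [Finset.sum_const, nsmul_eq_mul]
    field_simp

/-- Defining property of the conditional expectation, tested against a `P`-measurable `w`. -/
lemma sum_condAvg_mul {P : Finset (Finset X)} (hP : IsPartition P) (g w : X → ℝ)
    (hw : ∀ B ∈ P, ∀ x ∈ B, ∀ y ∈ B, w x = w y) :
    ∑ x, condAvg P g x * w x = ∑ x, g x * w x := by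
  rw [sum_parts hP, sum_parts hP]
  refine Finset.sum_congr rfl fun B hB => ?_
  rcases B.eq_empty_or_nonempty with rfl | ⟨z, hz⟩
  · simp
  · have hc : ∀ f : X → ℝ, ∑ x ∈ B, f x * w x = (∑ x ∈ B, f x) * w z := fun f => by
      rw [Finset.sum_mul]
      exact Finset.sum_congr rfl fun x hx => by rw [hw B hB x hx z hz]
    rw [hc, hc, sum_condAvg_part hP g hB]

/-- Truncation is cheap: each part contributes at most `η` to the mean of `g_P - h_P`, by upper
regularity on that part. -/
lemma sum_condAvg_sub_trunc_le [Nonempty X] {F P : Finset (Finset X)} (hP : IsPartition P)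
    (hPF : ∀ A ∈ P, A ∈ F) {g : X → ℝ} {η : ℝ} (hη : 0 ≤ η) (hreg : UpperReg F g η) :
    ∑ x, (condAvg P g x - trunc P g x) ≤ P.card * η * Fintype.card X := by
  have hN : (0 : ℝ) < Fintype.card X := by exact_mod_cast Fintype.card_pos
  rw [sum_parts hP]
  have key : ∀ B ∈ P, ∑ x ∈ B, (condAvg P g x - trunc P g x) ≤ η * Fintype.card X := by
    intro B hB
    rcases B.eq_empty_or_nonempty with rfl | ⟨z, hz⟩
    · simpa using mul_nonneg hη hN.le
    · by_cases h1 : condAvg P g z ≤ 1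
      · have : ∑ x ∈ B, (condAvg P g x - trunc P g x) = 0 := by
          refine Finset.sum_eq_zero fun x hx => ?_
          have : condAvg P g x = condAvg P g z := by
            rw [condAvg_eq hP g hB hx, condAvg_eq hP g hB hz]
          rw [trunc, this, min_eq_right h1, sub_self]
        rw [this]
        exact mul_nonneg hη hN.le
      · have h2 : ∑ x ∈ B, (condAvg P g x - trunc P g x) = ∑ x ∈ B, g x - B.card := by
          rw [Finset.sum_sub_distrib, sum_condAvg_part hP g hB]
          congr 1
          rw [Finset.sum_congr rfl (g := fun _ => (1 : ℝ))]
          · simp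
          · intro x hx
            have : condAvg P g x = condAvg P g z := by
              rw [condAvg_eq hP g hB hx, condAvg_eq hP g hB hz]
            rw [trunc, this, min_eq_left (not_le.1 h1).le]
        have h3 := hreg B (hPF B hB)
        unfold eavg at h3
        rw [div_add' _ _ _ hN.ne', div_le_div_iff_of_pos_right hN] at h3
        rw [h2]
        linarith
  calc _ ≤ ∑ B ∈ P, η * (Fintype.card X : ℝ) := Finset.sum_le_sum key
    _ = _ := by rw [Finset.sum_const, nsmul_eq_mul, mul_assoc]

lemma isPartition_inter {P Q : Finset (Finset X)} (hP : IsPartition P) (hQ : IsPartition Q) :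
    IsPartition (Finset.image₂ (· ∩ ·) P Q) := by
  constructor
  · intro x
    obtain ⟨B, hB, hxB⟩ := hP.1 x
    obtain ⟨C, hC, hxC⟩ := hQ.1 x
    exact ⟨B ∩ C, Finset.mem_image₂_of_mem hB hC, Finset.mem_inter.2 ⟨hxB, hxC⟩⟩
  · intro A hA A' hA' hne
    obtain ⟨B, hB, C, hC, rfl⟩ := Finset.mem_image₂.1 hA
    obtain ⟨B', hB', C', hC', rfl⟩ := Finset.mem_image₂.1 hA'
    rw [Finset.disjoint_left]
    intro x hx hx'
    simp only [Finset.mem_inter] at hx hx'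
    apply hne
    have e1 : B = B' := by
      by_contra h
      exact Finset.disjoint_left.1 (hP.2 B hB B' hB' h) hx.1 hx'.1
    have e2 : C = C' := by
      by_contra h
      exact Finset.disjoint_left.1 (hQ.2 C hC C' hC' h) hx.2 hx'.2
    rw [e1, e2]

/-- One step of the energy increment, unnormalised: sums over `X` stand for expectations, and
`δ` bounds the truncation loss `|P'| η` of the refined partition `P'`. -/
lemma energy_step [Nonempty X] {F : Finset (Finset X)} (hF : Standing F) {t : ℕ}
    (hsp : Splittable F t) {ε η : ℝ} (hη : 0 ≤ η) {g : X → ℝ} (hg : ∀ x, 0 ≤ g x)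
    (hreg : UpperReg F g η) {P : Finset (Finset X)} (hP : IsPartition P)
    (hPF : ∀ A ∈ P, A ∈ F) (hD : ¬ Disc F g (trunc P g) ε) {n : ℕ} (hn : P.card ≤ n)
    {δ : ℝ} (hδ : (n * t : ℕ) * η ≤ δ) (hδε : δ ≤ ε) :
    ∃ P' : Finset (Finset X), IsPartition P' ∧ (∀ A ∈ P', A ∈ F) ∧ P'.card ≤ n * t ∧
      ∑ x, trunc P g x ^ 2 + (ε - δ) ^ 2 * Fintype.card X
        - 2 * ((n * t : ℕ) * η) * Fintype.card X ≤ ∑ x, trunc P' g x ^ 2 := by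
  have hN : (0 : ℝ) < Fintype.card X := by exact_mod_cast Fintype.card_pos
  unfold Disc at hD
  push Not at hD
  obtain ⟨A, hA, hAε⟩ := hD
  obtain ⟨Q, hQ, hQF, hAQ, hQt⟩ := hsp A hA
  have hP' := isPartition_inter hP hQ
  have hP'F : ∀ B ∈ Finset.image₂ (· ∩ ·) P Q, B ∈ F := by
    intro B hB
    obtain ⟨D, hD, C, hC, rfl⟩ := Finset.mem_image₂.1 hB
    exact hF.1 D (hPF D hD) C (hQF C hC)
  have hcard : (Finset.image₂ (· ∩ ·) P Q).card ≤ n * t :=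
    (Finset.card_image₂_le _ _ _).trans (Nat.mul_le_mul hn hQt)
  -- the indicator of `A` and `h_P` are both measurable for the refinement
  have hAc : ∀ B ∈ Finset.image₂ (· ∩ ·) P Q, ∀ x ∈ B, ∀ y ∈ B,
      (if x ∈ A then (1 : ℝ) else 0) = if y ∈ A then 1 else 0 := by
    intro B hB x hx y hy
    obtain ⟨D, hD, C, hC, rfl⟩ := Finset.mem_image₂.1 hB
    simp only [Finset.mem_inter] at hx hy
    by_cases hCA : C = A
    · subst hCA
      simp [hx.2, hy.2]
    · have hd := Finset.disjoint_left.1 (hQ.2 C hC A hAQ hCA)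
      simp [hd hx.2, hd hy.2]
  have hhc : ∀ B ∈ Finset.image₂ (· ∩ ·) P Q, ∀ x ∈ B, ∀ y ∈ B,
      trunc P g x = trunc P g y := by
    intro B hB x hx y hy
    obtain ⟨D, hD, C, hC, rfl⟩ := Finset.mem_image₂.1 hB
    simp only [Finset.mem_inter] at hx hy
    exact trunc_const hP g D hD x hx.1 y hy.1
  have hloss := sum_condAvg_sub_trunc_le hP' hP'F hη hreg
  generalize Finset.image₂ (· ∩ ·) P Q = P' at *
  refine ⟨P', hP', hP'F, hcard, ?_⟩
  have hloss' : ∑ x, (condAvg P' g x - trunc P' g x) ≤ ((n * t : ℕ) * η) * Fintype.card X := by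
    refine hloss.trans ?_
    have : (P'.card : ℝ) ≤ (n * t : ℕ) := by exact_mod_cast hcard
    gcongr
  have hsumA : ∑ x ∈ A, condAvg P' g x = ∑ x ∈ A, g x := by
    have := sum_condAvg_mul hP' g _ hAc
    simpa [mul_ite, Finset.sum_ite_mem] using this
  have horth : ∑ x, condAvg P' g x * trunc P g x = ∑ x, condAvg P g x * trunc P g x := by
    rw [sum_condAvg_mul hP' g _ hhc, sum_condAvg_mul hP g _ (trunc_const hP g)]
  have hlossA : ∑ x ∈ A, (condAvg P' g x - trunc P' g x) ≤ δ * Fintype.card X := by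
    calc _ ≤ ∑ x, (condAvg P' g x - trunc P' g x) :=
          Finset.sum_le_univ_sum_of_nonneg fun x => sub_nonneg.2 (trunc_le_condAvg P' g x)
      _ ≤ _ := hloss'.trans (by gcongr)
  have hlossA0 : 0 ≤ ∑ x ∈ A, (condAvg P' g x - trunc P' g x) :=
    Finset.sum_nonneg fun x _ => sub_nonneg.2 (trunc_le_condAvg P' g x)
  have hbig : (ε - δ) * Fintype.card X ≤ |∑ x ∈ A, (trunc P' g x - trunc P g x)| := by
    unfold eavg at hAε
    rw [abs_div, abs_of_pos hN, lt_div_iff₀ hN] at hAε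
    have e : ∑ x ∈ A, (g x - trunc P g x) = ∑ x ∈ A, (trunc P' g x - trunc P g x)
        + ∑ x ∈ A, (condAvg P' g x - trunc P' g x) := by
      simp only [Finset.sum_sub_distrib]
      linarith
    rw [e] at hAε
    have := abs_add_le (∑ x ∈ A, (trunc P' g x - trunc P g x))
      (∑ x ∈ A, (condAvg P' g x - trunc P' g x))
    rw [abs_of_nonneg hlossA0] at this
    linarith
  have hL2 : (ε - δ) ^ 2 * Fintype.card X ≤ ∑ x, (trunc P' g x - trunc P g x) ^ 2 := by
    have h1 : ((ε - δ) * Fintype.card X) ^ 2 ≤ (∑ x ∈ A, (trunc P' g x - trunc P g x)) ^ 2 := by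
      rw [← sq_abs (∑ x ∈ A, (trunc P' g x - trunc P g x))]
      exact pow_le_pow_left₀ (mul_nonneg (sub_nonneg.2 hδε) hN.le) hbig 2
    have h2 := sq_sum_le_card_mul_sum_sq (s := A) (f := fun x => trunc P' g x - trunc P g x)
    have h3 : (A.card : ℝ) ≤ Fintype.card X := by exact_mod_cast Finset.card_le_univ A
    have h4 : ∑ x ∈ A, (trunc P' g x - trunc P g x) ^ 2
        ≤ ∑ x, (trunc P' g x - trunc P g x) ^ 2 :=
      Finset.sum_le_univ_sum_of_nonneg fun x => sq_nonneg _
    have h5 : (A.card : ℝ) * ∑ x ∈ A, (trunc P' g x - trunc P g x) ^ 2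
        ≤ Fintype.card X * ∑ x, (trunc P' g x - trunc P g x) ^ 2 := by
      gcongr
    have h6 : (Fintype.card X : ℝ) * ((ε - δ) ^ 2 * Fintype.card X)
        ≤ Fintype.card X * ∑ x, (trunc P' g x - trunc P g x) ^ 2 := by
      calc _ = ((ε - δ) * Fintype.card X) ^ 2 := by ring
        _ ≤ _ := h1.trans (h2.trans h5)
    exact le_of_mul_le_mul_left h6 hN
  have hcross : -(((n * t : ℕ) * η) * Fintype.card X)
      ≤ ∑ x, (trunc P' g x - trunc P g x) * trunc P g x := by
    have e : ∑ x, (trunc P' g x - trunc P g x) * trunc P g x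
        = ∑ x, (condAvg P g x - trunc P g x) * trunc P g x
          - ∑ x, (condAvg P' g x - trunc P' g x) * trunc P g x := by
      simp only [sub_mul, Finset.sum_sub_distrib]
      linarith
    have h1 : 0 ≤ ∑ x, (condAvg P g x - trunc P g x) * trunc P g x :=
      Finset.sum_nonneg fun x _ =>
        mul_nonneg (sub_nonneg.2 (trunc_le_condAvg P g x)) (trunc_nonneg P hg x)
    have h2 : ∑ x, (condAvg P' g x - trunc P' g x) * trunc P g x
        ≤ ∑ x, (condAvg P' g x - trunc P' g x) :=
      Finset.sum_le_sum fun x _ =>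
        mul_le_of_le_one_right (sub_nonneg.2 (trunc_le_condAvg P' g x)) (trunc_le_one P g x)
    linarith
  have hexp : ∑ x, trunc P' g x ^ 2 = ∑ x, trunc P g x ^ 2
      + ∑ x, (trunc P' g x - trunc P g x) ^ 2
      + 2 * ∑ x, (trunc P' g x - trunc P g x) * trunc P g x := by
    rw [Finset.mul_sum, ← Finset.sum_add_distrib, ← Finset.sum_add_distrib]
    exact Finset.sum_congr rfl fun x _ => by ring
  linarith

end Helpers

/-- **Abstract weak regularity lemma.** Let `𝓕` be a `t`-splittable family satisfying
the standing assumptions, `0 < ε, η < 1`, `T := t^{20/ε²}`, and `η ≤ ε/(8tT)`. Then for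
any upper `η`-regular `g : X → ℝ≥0` there is `g' : X → [0,1]` with complexity at most
`T` such that `(g, g')` is an `ε`-discrepancy pair. -/
theorem abstract_weak_regularity (X : Type) [Fintype X] [DecidableEq X] [Nonempty X]
    (F : Finset (Finset X)) (hF : Standing F)
    (t : ℕ) (ht : 2 ≤ t) (hsp : Splittable F t)
    (ε η : ℝ) (hε0 : 0 < ε) (hε1 : ε < 1) (hη0 : 0 < η) (hη1 : η < 1)
    (hηbd : η ≤ ε / (8 * (t : ℝ) * (t : ℝ) ^ (20 / ε ^ 2)))
    (g : X → ℝ) (hg : ∀ x, 0 ≤ g x) (hreg : UpperReg F g η) :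
    ∃ g' : X → ℝ, (∀ x, 0 ≤ g' x ∧ g' x ≤ 1) ∧
      ComplexityLE F g' ((t : ℝ) ^ (20 / ε ^ 2)) ∧ Disc F g g' ε := by
  have hN : (0 : ℝ) < Fintype.card X := by exact_mod_cast Fintype.card_pos
  have ht1 : (1 : ℝ) ≤ t := by exact_mod_cast (by omega : 1 ≤ t)
  have ht2 : (2 : ℝ) ≤ t := by exact_mod_cast ht
  have hTpos : (0 : ℝ) < (t : ℝ) ^ (20 / ε ^ 2) := Real.rpow_pos_of_pos (by linarith) _
  have hpow : ∀ i : ℕ, i ≤ ⌊20 / ε ^ 2⌋₊ → ((t ^ i : ℕ) : ℝ) ≤ (t : ℝ) ^ (20 / ε ^ 2) := by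
    intro i hi
    push_cast
    rw [← Real.rpow_natCast]
    exact Real.rpow_le_rpow_of_exponent_le ht1
      ((Nat.cast_le.2 hi).trans (Nat.floor_le (by positivity)))
  have hηT : (t : ℝ) ^ (20 / ε ^ 2) * η ≤ ε / 16 := by
    rw [le_div_iff₀ (by positivity)] at hηbd
    nlinarith [mul_pos hTpos hη0]
  by_contra hcon
  push Not at hcon
  have hfail : ∀ P : Finset (Finset X), IsPartition P → (∀ A ∈ P, A ∈ F) →
      (P.card : ℝ) ≤ (t : ℝ) ^ (20 / ε ^ 2) → ¬ Disc F g (trunc P g) ε := fun P hP hPF hc =>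
    hcon _ (fun x => ⟨trunc_nonneg P hg x, trunc_le_one P g x⟩)
      ⟨P, hP, hPF, hc, trunc_const hP g⟩
  -- the loss `4 t^i η` absorbs the geometric series of the losses `2 t^(j+1) η`, as `t ≥ 2`
  have hiter : ∀ i : ℕ, i ≤ ⌊20 / ε ^ 2⌋₊ → ∃ P : Finset (Finset X), IsPartition P ∧
      (∀ A ∈ P, A ∈ F) ∧ P.card ≤ t ^ i ∧
      (3 / 4 * i * ε ^ 2 - 4 * ((t ^ i : ℕ) * η)) * Fintype.card X ≤ ∑ x, trunc P g x ^ 2 := by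
    intro i
    induction i with
    | zero =>
      intro _
      refine ⟨{Finset.univ}, ⟨by simp, ?_⟩, by simpa using hF.2.1, by simp, ?_⟩
      · intro A hA B hB hne
        simp only [Finset.mem_singleton] at hA hB
        exact absurd (hA.trans hB.symm) hne
      · refine le_trans ?_ (Finset.sum_nonneg fun x _ => sq_nonneg _)
        have := mul_pos hη0 hN
        simp
        nlinarith
    | succ i ih =>
      intro hi
      obtain ⟨P, hP, hPF, hc, hE⟩ := ih (by omega)
      have hD := hfail P hP hPF ((Nat.cast_le.2 hc).trans (hpow i (by omega)))
      have hδ : ((t ^ i * t : ℕ) : ℝ) * η ≤ ε / 16 := by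
        rw [← pow_succ]
        exact (mul_le_mul_of_nonneg_right (hpow (i + 1) hi) hη0.le).trans hηT
      obtain ⟨P', hP', hP'F, hc', hE'⟩ :=
        energy_step hF hsp hη0.le hg hreg hP hPF hD hc hδ (by linarith)
      refine ⟨P', hP', hP'F, by rwa [pow_succ], le_trans ?_ hE'⟩
      have hgeo : 2 * (((t ^ i : ℕ) : ℝ) * η) ≤ ((t ^ i * t : ℕ) : ℝ) * η := by
        push_cast
        have : 0 ≤ (t : ℝ) ^ i * η := by positivity
        nlinarith
      have hmain : 3 / 4 * ((i + 1 : ℕ) : ℝ) * ε ^ 2 - 4 * (((t ^ (i + 1) : ℕ) : ℝ) * η)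
          ≤ (3 / 4 * i * ε ^ 2 - 4 * ((t ^ i : ℕ) * η)) + (ε - ε / 16) ^ 2
            - 2 * (((t ^ i * t : ℕ) : ℝ) * η) := by
        rw [pow_succ t i, Nat.cast_succ]
        nlinarith [sq_nonneg ε]
      have := mul_le_mul_of_nonneg_right hmain hN.le
      linarith
  obtain ⟨P, -, -, -, hE⟩ := hiter _ le_rfl
  have hE1 : ∑ x, trunc P g x ^ 2 ≤ 1 * Fintype.card X := by
    calc _ ≤ ∑ _x : X, (1 : ℝ) := Finset.sum_le_sum fun x _ =>
          pow_le_one₀ (trunc_nonneg P hg x) (trunc_le_one P g x)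
      _ = _ := by simp
  have h1 := le_of_mul_le_mul_right (hE.trans hE1) hN
  have h2 : (((t ^ ⌊20 / ε ^ 2⌋₊ : ℕ)) : ℝ) * η ≤ ε / 16 :=
    (mul_le_mul_of_nonneg_right (hpow _ le_rfl) hη0.le).trans hηT
  have h3 := Nat.lt_floor_add_one (20 / ε ^ 2)
  rw [div_lt_iff₀ (by positivity)] at h3
  have h4 : ε ^ 2 < 1 := by nlinarith
  nlinarith
end
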